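/- Let m, n ∈ ℕ, let k < 2^m have base-2 digits k_1, …, k_m (least significant first), and let φ : (Fin n → Bool) → Bool be any Boolean predicate. Then the model count of the predicate on pairs (y, x) ∈ (Fin m → Bool) × (Fin n → Bool) given by H^k_m(y) ∧ φ(x) equals k · #(φ). That is, conjoining the gadget H^k_m over a disjoint set of fresh variables multiplies the model count by k. -/

import Mathlib

/-- The recursive gadget `H^k_i`: `H^k_0(y) = false` and
`H^k_{i+1}(y) = y_{i+1} ∨ H^k_i(y)` if the `(i+1)`-st base-2 digit of `k`
(least significant first, i.e. `Nat.testBit k i`) is `1`, and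
`H^k_{i+1}(y) = y_{i+1} ∧ H^k_i(y)` otherwise.  Bits are zero-indexed here. -/
def Hgadget (k : ℕ) (y : ℕ → Bool) : ℕ → Bool
  | 0 => false
  | i + 1 => if Nat.testBit k i then y i || Hgadget k y i else y i && Hgadget k y i

theorem Hgadget_congr (k : ℕ) (y z : ℕ → Bool) (m : ℕ) (h : ∀ i < m, y i = z i) :
    Hgadget k y m = Hgadget k z m := by
  induction m with
  | zero => rfl
  | succ m ih =>
    simp only [Hgadget]
    rw [ih (fun i hi => h i (by omega)), h m (by omega)]

theorem Hgadget_sum (k m : ℕ) :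
    (∑ y : Fin m → Bool,
      (Hgadget k (fun i => if h : i < m then y ⟨i, h⟩ else false) m).toNat) = k % 2 ^ m := by
  induction m with
  | zero => simp [Hgadget, Nat.mod_one]
  | succ m ih =>
    rw [← (Fin.snocEquiv (fun _ : Fin (m + 1) => Bool)).sum_comp, Fintype.sum_prod_type]
    have key : ∀ (b : Bool) (y : Fin m → Bool),
        Hgadget k (fun i => if h : i < m + 1 then
          (Fin.snocEquiv (fun _ : Fin (m + 1) => Bool)) (b, y) ⟨i, h⟩ else false) m =
        Hgadget k (fun i => if h : i < m then y ⟨i, h⟩ else false) m := by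
      intro b y
      apply Hgadget_congr
      intro i hi
      have hi' : i < m + 1 := by omega
      simp [hi, hi', Fin.snocEquiv, Fin.snoc]
    have key2 : ∀ (b : Bool) (y : Fin m → Bool),
        (Fin.snocEquiv (fun _ : Fin (m + 1) => Bool)) (b, y) ⟨m, Nat.lt_succ_self m⟩ = b := by
      intro b y
      simp [Fin.snocEquiv, Fin.snoc]
    have hc : ∀ (b : Bool) (y : Fin m → Bool),
        Hgadget k (fun i => if h : i < m + 1 then
          (Fin.snocEquiv (fun _ : Fin (m + 1) => Bool)) (b, y) ⟨i, h⟩ else false) (m + 1) =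
        if Nat.testBit k m then
          b || Hgadget k (fun i => if h : i < m then y ⟨i, h⟩ else false) m
        else b && Hgadget k (fun i => if h : i < m then y ⟨i, h⟩ else false) m := by
      intro b y
      rw [Hgadget, key, dif_pos (Nat.lt_succ_self m), key2]
    simp only [hc]
    rw [Nat.mod_pow_succ, Nat.testBit_eq_decide_div_mod_eq, ← ih]
    rcases Nat.mod_two_eq_zero_or_one (k / 2 ^ m) with h0 | h0 <;>
      simp [h0, Fintype.sum_bool, add_comm]

/-- Conjoining the gadget `H^k_m` over fresh variables `y` multiplies the model count of
any predicate `φ` by `k`: the number of pairs `(y, x)` with `H^k_m(y) ∧ φ(x)` is `k · #(φ)`. -/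
theorem Hgadget_conj_modelCount (m n k : ℕ) (hk : k < 2 ^ m)
    (φ : (Fin n → Bool) → Bool) :
    (Finset.univ.filter fun p : (Fin m → Bool) × (Fin n → Bool) =>
        Hgadget k (fun i => if h : i < m then p.1 ⟨i, h⟩ else false) m = true ∧
          φ p.2 = true).card =
      k * (Finset.univ.filter fun x : Fin n → Bool => φ x = true).card := by
  have h := Hgadget_sum k m
  rw [Nat.mod_eq_of_lt hk] at h
  rw [← Finset.univ_product_univ, Finset.filter_product
    (fun y : Fin m → Bool =>
      Hgadget k (fun i => if h : i < m then y ⟨i, h⟩ else false) m = true)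
    (fun x : Fin n → Bool => φ x = true), Finset.card_product]
  congr 1
  rw [Finset.card_filter]
  refine Eq.trans (Finset.sum_congr rfl fun y _ => ?_) h
  cases Hgadget k (fun i => if h : i < m then y ⟨i, h⟩ else false) m <;> rfl
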